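/- Markov-type inequality for exponential sums (discrete form): let u(t) = c₀ + Σ_{i=1}^m cᵢ γᵢ^t with cᵢ ∈ ℝ and γᵢ > 0, viewed as a function on [0, ∞). Then for every integer t ≥ 1, |u(t+1) − u(t)| ≤ (2m/t) · sup_{s ≥ 0} |u(s)|. -/

import Mathlib

open Finset

noncomputable def osum (k : ℕ) (p : ℕ → ℝ) (L : Finset ℝ) (b : ℝ → ℝ) (t : ℝ) : ℝ :=
  ∑ i ∈ range k, p i * t ^ (2 * i + 1) + ∑ l ∈ L, b l * Real.sinh (l * t)

lemma between_card (N : ℕ) (y : ℕ → ℝ) (hy : ∀ i < N, y i < y (i + 1)) (P : ℝ → Prop)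
    (hP : ∀ i < N, ∃ z, y i < z ∧ z < y (i + 1) ∧ P z) :
    ∃ S : Finset ℝ, S.card = N ∧ ∀ z ∈ S, P z ∧ y 0 < z := by
  have key : ∀ N : ℕ, (∀ i < N, y i < y (i + 1)) →
      (∀ i < N, ∃ z, y i < z ∧ z < y (i + 1) ∧ P z) →
      y 0 ≤ y N ∧ ∃ S : Finset ℝ, S.card = N ∧ ∀ z ∈ S, P z ∧ y 0 < z ∧ z < y N := by
    intro N
    induction N with
    | zero => intro _ _; exact ⟨le_refl _, ∅, by simp⟩
    | succ N ih =>
      intro h1 h2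
      obtain ⟨h0, S, hS, hS2⟩ := ih (fun i hi => h1 i (by omega)) (fun i hi => h2 i (by omega))
      obtain ⟨z, hz1, hz2, hz3⟩ := h2 N (by omega)
      have h3 := h1 N (by omega)
      refine ⟨by linarith, insert z S, ?_, ?_⟩
      · rw [card_insert_of_notMem, hS]
        intro hz
        have := (hS2 z hz).2.2
        linarith
      · intro w hw
        rcases mem_insert.1 hw with rfl | hw
        · exact ⟨hz3, by linarith, hz2⟩
        · obtain ⟨a1, a2, a3⟩ := hS2 w hw
          exact ⟨a1, a2, by linarith⟩
  obtain ⟨_, S, hS, hS2⟩ := key N hy hP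
  exact ⟨S, hS, fun z hz => ⟨(hS2 z hz).1, (hS2 z hz).2.1⟩⟩

lemma rolle_card (N : ℕ) (f f' : ℝ → ℝ) (hf : ∀ t, HasDerivAt f (f' t) t) (S : Finset ℝ)
    (hS : S.card = N + 1) (h0 : ∀ z ∈ S, f z = 0) :
    ∃ S' : Finset ℝ, S'.card = N ∧ ∀ z ∈ S', f' z = 0 := by
  let e := S.orderEmbOfFin hS
  let y : ℕ → ℝ := fun i => if h : i < N + 1 then e ⟨i, h⟩ else 0
  have hy : ∀ i < N, y i < y (i + 1) := by
    intro i hi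
    have h1 : i < N + 1 := by omega
    have h2 : i + 1 < N + 1 := by omega
    simp only [y, h1, h2, dif_pos]
    exact e.strictMono (by simp [Fin.lt_def])
  have hy0 : ∀ i < N + 1, f (y i) = 0 := by
    intro i hi
    simp only [y, hi, dif_pos]
    exact h0 _ (S.orderEmbOfFin_mem hS _)
  obtain ⟨S', h1, h2⟩ := between_card N y hy (fun z => f' z = 0) (by
    intro i hi
    obtain ⟨c, hc, hc2⟩ := exists_hasDerivAt_eq_zero (hy i hi)
      (fun x _ => (hf x).continuousAt.continuousWithinAt)
      ((hy0 i (by omega)).trans (hy0 (i+1) (by omega)).symm) (fun x _ => hf x)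
    exact ⟨c, hc.1, hc.2, hc2⟩)
  exact ⟨S', h1, fun z hz => (h2 z hz).1⟩

lemma rolle_two (N : ℕ) (f f1 f2 : ℝ → ℝ) (a : ℝ) (hf : ∀ t, HasDerivAt f (f1 t) t)
    (hf1 : ∀ t, HasDerivAt f1 (f2 t) t) (S : Finset ℝ)
    (hS : S.card = N + 2) (h0 : ∀ z ∈ S, f z = 0) :
    ∃ S' : Finset ℝ, S'.card = N ∧ ∀ z ∈ S', f2 z - a ^ 2 * f z = 0 := by
  have he : ∀ a t : ℝ, HasDerivAt (fun t => Real.exp (a * t)) (Real.exp (a * t) * a) t := by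
    intro a t
    have := ((hasDerivAt_id t).const_mul a).exp
    simpa using this
  obtain ⟨S1, h1, h2⟩ := rolle_card (N+1) (fun t => Real.exp (-a * t) * f t) _
    (fun t => (he (-a) t).mul (hf t)) S hS (fun z hz => by simp [h0 z hz])
  obtain ⟨S2, h3, h4⟩ := rolle_card N (fun t => Real.exp (a * t) * (f1 t - a * f t)) _
    (fun t => (he a t).mul ((hf1 t).sub ((hf t).const_mul a))) S1 h1 (fun z hz => by
      have h := h2 z hz
      have : Real.exp (-a * z) * (f1 z - a * f z) = 0 := by linarith
      have := (mul_eq_zero.1 this).resolve_left (Real.exp_ne_zero _)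
      simp [this])
  refine ⟨S2, h3, fun z hz => ?_⟩
  have h := h4 z hz
  have : Real.exp (a * z) * (f2 z - a^2 * f z) = 0 := by linarith
  exact (mul_eq_zero.1 this).resolve_left (Real.exp_ne_zero _)

lemma sinh_zero (L : Finset ℝ) : (∀ l ∈ L, 0 < l) → ∀ (b : ℝ → ℝ) (S : Finset ℝ),
    S.card = 2 * L.card → (∀ z ∈ S, ∑ l ∈ L, b l * Real.sinh (l * z) = 0) → ∀ l ∈ L, b l = 0 := by
  induction L using Finset.induction_on with
  | empty => simp
  | insert a L ha ih =>
    intro hL b S hS h0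
    rw [card_insert_of_notMem ha] at hS
    have d1 : ∀ t, HasDerivAt (fun t => ∑ l ∈ insert a L, b l * Real.sinh (l * t))
        (∑ l ∈ insert a L, b l * (Real.cosh (l * t) * l)) t := by
      intro t
      refine HasDerivAt.fun_sum fun l _ => ?_
      have := ((hasDerivAt_id t).const_mul l).sinh.const_mul (b l)
      simpa using this
    have d2 : ∀ t, HasDerivAt (fun t => ∑ l ∈ insert a L, b l * (Real.cosh (l * t) * l))
        (∑ l ∈ insert a L, b l * (Real.sinh (l * t) * l * l)) t := by
      intro t
      refine HasDerivAt.fun_sum fun l _ => ?_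
      have := (((hasDerivAt_id t).const_mul l).cosh.mul_const l).const_mul (b l)
      simpa using this
    obtain ⟨S', h1, h2⟩ := rolle_two (2 * L.card) _ _ _ a d1 d2 S (by omega) h0
    have hb := ih (fun l hl => hL l (mem_insert_of_mem hl)) (fun l => b l * (l^2 - a^2)) S' h1 (by
      intro z hz
      rw [← h2 z hz, mul_sum, ← sum_sub_distrib, sum_insert ha]
      rw [show b a * (Real.sinh (a * z) * a * a) - a ^ 2 * (b a * Real.sinh (a * z)) = 0 by ring,
        zero_add]
      exact sum_congr rfl fun l _ => by ring)
    have hb' : ∀ l ∈ L, b l = 0 := by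
      intro l hl
      refine (mul_eq_zero.1 (hb l hl)).resolve_right ?_
      have h3 := hL l (mem_insert_of_mem hl)
      have h4 := hL a (mem_insert_self _ _)
      have h5 : l ≠ a := fun h => ha (h ▸ hl)
      rw [sq_sub_sq]
      exact mul_ne_zero (by positivity) (sub_ne_zero.2 h5)
    intro l hl
    rcases mem_insert.1 hl with rfl | hl
    · have hc : 1 < S.card := by omega
      obtain ⟨z, hz, hz0⟩ := exists_mem_ne hc 0
      have h := h0 z hz
      rw [sum_insert ha, sum_eq_zero (fun l hl => by rw [hb' l hl, zero_mul]), add_zero] at h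
      refine (mul_eq_zero.1 h).resolve_right ?_
      have := hL l (mem_insert_self _ _)
      exact fun h => mul_ne_zero this.ne' hz0 (Real.sinh_eq_zero.1 h)
    · exact hb' l hl

lemma osum_zero (L : Finset ℝ) (hL : ∀ l ∈ L, 0 < l) (k : ℕ) : ∀ (p : ℕ → ℝ) (b : ℝ → ℝ)
    (S : Finset ℝ), S.card = 2 * (k + L.card) → (∀ z ∈ S, osum k p L b z = 0) →
    (∀ i < k, p i = 0) ∧ ∀ l ∈ L, b l = 0 := by
  induction k with
  | zero =>
    intro p b S hS h0
    refine ⟨by simp, sinh_zero L hL b S (by omega) (fun z hz => ?_)⟩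
    simpa [osum] using h0 z hz
  | succ k ih =>
    intro p b S hS h0
    have d1 : ∀ t, HasDerivAt (osum (k+1) p L b)
        (∑ i ∈ range (k+1), p i * ((2 * i + 1 : ℕ) * t ^ (2 * i)) +
          ∑ l ∈ L, b l * (Real.cosh (l * t) * l)) t := by
      intro t
      unfold osum
      refine HasDerivAt.add (HasDerivAt.fun_sum fun i _ => ?_) (HasDerivAt.fun_sum fun l _ => ?_)
      · exact (hasDerivAt_pow (2*i+1) t).const_mul (p i)
      · have := ((hasDerivAt_id t).const_mul l).sinh.const_mul (b l)
        simpa using this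
    have d2 : ∀ t, HasDerivAt (fun t => ∑ i ∈ range (k+1), p i * ((2 * i + 1 : ℕ) * t ^ (2 * i)) +
          ∑ l ∈ L, b l * (Real.cosh (l * t) * l))
        (∑ i ∈ range (k+1), p i * ((2 * i + 1 : ℕ) * ((2 * i : ℕ) * t ^ (2 * i - 1))) +
          ∑ l ∈ L, b l * (Real.sinh (l * t) * l * l)) t := by
      intro t
      refine HasDerivAt.add (HasDerivAt.fun_sum fun i _ => ?_) (HasDerivAt.fun_sum fun l _ => ?_)
      · exact ((hasDerivAt_pow (2*i) t).const_mul _).const_mul (p i)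
      · have := (((hasDerivAt_id t).const_mul l).cosh.mul_const l).const_mul (b l)
        simpa using this
    obtain ⟨S', h1, h2⟩ := rolle_two (2 * (k + L.card)) _ _ _ 0 d1 d2 S (by omega) h0
    obtain ⟨hp, hb⟩ := ih (fun i => p (i+1) * ((2 * (i+1) + 1 : ℕ) * (2 * (i+1) : ℕ)))
      (fun l => b l * (l * l)) S' h1 (by
      intro z hz
      rw [← h2 z hz, sum_range_succ']
      unfold osum
      simp only [mul_zero, Nat.cast_zero, zero_mul, add_zero, ne_eq, OfNat.ofNat_ne_zero,
        not_false_eq_true, zero_pow, sub_zero]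
      congr 1
      · refine sum_congr rfl fun i _ => ?_
        rw [show 2 * (i+1) - 1 = 2 * i + 1 by omega]
        ring
      · exact sum_congr rfl fun l _ => by ring)
    have hb' : ∀ l ∈ L, b l = 0 := fun l hl =>
      (mul_eq_zero.1 (hb l hl)).resolve_right (mul_ne_zero (hL l hl).ne' (hL l hl).ne')
    have hp' : ∀ i < k, p (i+1) = 0 := fun i hi =>
      (mul_eq_zero.1 (hp i hi)).resolve_right (by positivity)
    refine ⟨?_, hb'⟩
    intro i hi
    rcases i with _ | i
    · have hc : 1 < S.card := by omega
      obtain ⟨z, hz, hz0⟩ := exists_mem_ne hc 0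
      have h := h0 z hz
      unfold osum at h
      rw [sum_eq_zero (s := L) (fun l hl => by rw [hb' l hl, zero_mul]), add_zero, sum_range_succ',
        sum_eq_zero (fun i hi => by rw [hp' i (mem_range.1 hi), zero_mul])] at h
      simpa [hz0] using h
    · exact hp' i (by omega)

lemma osum_neg (k : ℕ) (p : ℕ → ℝ) (L : Finset ℝ) (b : ℝ → ℝ) (t : ℝ) :
    osum k p L b (-t) = - osum k p L b t := by
  unfold osum
  rw [neg_add, ← sum_neg_distrib, ← sum_neg_distrib]
  congr 1
  · refine sum_congr rfl fun i _ => ?_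
    rw [Odd.neg_pow ⟨i, rfl⟩]; ring
  · refine sum_congr rfl fun i _ => ?_
    rw [mul_neg, Real.sinh_neg]; ring

/-- positive zero count -/
lemma osum_pos_zero (L : Finset ℝ) (hL : ∀ l ∈ L, 0 < l) (k : ℕ) (p : ℕ → ℝ) (b : ℝ → ℝ)
    (S : Finset ℝ) (hS : S.card = k + L.card) (hpos : ∀ z ∈ S, 0 < z)
    (h0 : ∀ z ∈ S, osum k p L b z = 0) :
    (∀ i < k, p i = 0) ∧ ∀ l ∈ L, b l = 0 := by
  refine osum_zero L hL k p b (S ∪ S.map (Equiv.neg ℝ).toEmbedding) ?_ ?_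
  · rw [card_union_of_disjoint, card_map, hS]; · ring
    rw [disjoint_left]
    intro z hz hz2
    obtain ⟨w, hw, rfl⟩ := mem_map.1 hz2
    have h1 := hpos _ hw
    have h2 := hpos _ hz
    simp at h2
    linarith
  · intro z hz
    rcases mem_union.1 hz with hz | hz
    · exact h0 z hz
    · obtain ⟨w, hw, rfl⟩ := mem_map.1 hz
      simp [osum_neg, h0 w hw]

lemma osum_eq_zero {k : ℕ} {p : ℕ → ℝ} {L : Finset ℝ} {b : ℝ → ℝ}
    (h : (∀ i < k, p i = 0) ∧ ∀ l ∈ L, b l = 0) (t : ℝ) : osum k p L b t = 0 := by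
  unfold osum
  rw [sum_eq_zero (fun i hi => by rw [h.1 i (mem_range.1 hi), zero_mul]),
    sum_eq_zero (fun i hi => by rw [h.2 i hi, zero_mul]), add_zero]

lemma osum_cont (k : ℕ) (p : ℕ → ℝ) (L : Finset ℝ) (b : ℝ → ℝ) : Continuous (osum k p L b) := by
  unfold osum
  refine Continuous.add ?_ ?_
  · fun_prop
  · refine continuous_finsetSum _ fun l _ => ?_
    exact continuous_const.mul (Real.continuous_sinh.comp (by fun_prop))

/-- no strict alternation at `k + card + 1` positive points -/
lemma no_alt (L : Finset ℝ) (hL : ∀ l ∈ L, 0 < l) (k : ℕ) (p : ℕ → ℝ) (b : ℝ → ℝ) (N : ℕ)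
    (hN : N = k + L.card) (y : ℕ → ℝ) (hy0 : 0 < y 0) (hy : ∀ i < N, y i < y (i + 1))
    (halt : ∀ i ≤ N, 0 < (-1) ^ i * osum k p L b (y i)) : False := by
  obtain ⟨S, h1, h2⟩ := between_card N y hy (fun z => osum k p L b z = 0) (by
    intro i hi
    have a1 := halt i (by omega)
    have a2 := halt (i+1) (by omega)
    have hc : ContinuousOn (fun z => (-1) ^ i * osum k p L b z) (Set.Icc (y i) (y (i+1))) :=
      (continuous_const.mul (osum_cont k p L b)).continuousOn
    obtain ⟨z, hz, hz2⟩ := intermediate_value_Ioo' (hy i hi).le hc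
      (show (0:ℝ) ∈ _ from ⟨by rw [pow_succ] at a2; linarith, a1⟩)
    refine ⟨z, hz.1, hz.2, ?_⟩
    exact (mul_eq_zero.1 hz2).resolve_left (by simp))
  have hz := osum_pos_zero L hL k p b S (by omega) (fun z hz => hy0.trans (h2 z hz).2)
    (fun z hz => (h2 z hz).1)
  have := halt 0 (by omega)
  rw [osum_eq_zero hz] at this
  simp at this

lemma interp (L : Finset ℝ) (hL : ∀ l ∈ L, 0 < l) (k n : ℕ) (hn : n = k + L.card) (x : ℕ → ℝ)
    (hx0 : ∀ i < n, 0 < x i) (hx : ∀ i < n, ∀ j < n, x i = x j → i = j) (v : ℕ → ℝ) :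
    ∃ p b, ∀ i < n, osum k p L b (x i) = v i := by
  classical
  let F : ((Fin k → ℝ) × (L → ℝ)) →ₗ[ℝ] (Fin n → ℝ) :=
    { toFun := fun w j => ∑ i : Fin k, w.1 i * x j ^ (2 * (i:ℕ) + 1)
        + ∑ l : L, w.2 l * Real.sinh (l * x j)
      map_add' := by
        intro a c; ext j
        simp only [Prod.fst_add, Prod.snd_add, Pi.add_apply, add_mul, sum_add_distrib]
        ring
      map_smul' := by
        intro a c; ext j
        simp only [Prod.smul_fst, Prod.smul_snd, Pi.smul_apply, smul_eq_mul, RingHom.id_apply,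
          mul_add, mul_sum, mul_assoc] }
  let P : ((Fin k → ℝ) × (L → ℝ)) → ℕ → ℝ := fun w i => if h : i < k then w.1 ⟨i, h⟩ else 0
  let Q : ((Fin k → ℝ) × (L → ℝ)) → ℝ → ℝ := fun w l => if h : l ∈ L then w.2 ⟨l, h⟩ else 0
  have hF : ∀ w j, F w j = osum k (P w) L (Q w) (x j) := by
    intro w j
    unfold osum
    rw [Finset.sum_range, ← Finset.sum_coe_sort L]
    simp [F, P, Q]
  have inj : Function.Injective F := by
    rw [← LinearMap.ker_eq_bot, LinearMap.ker_eq_bot']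
    intro w hw
    have hz := osum_pos_zero L hL k (P w) (Q w) ((range n).image x)
      (by rw [card_image_of_injOn, card_range, hn]
          intro i hi j hj h
          exact hx i (by simpa using hi) j (by simpa using hj) h)
      (by intro z hz
          obtain ⟨i, hi, rfl⟩ := mem_image.1 hz
          exact hx0 i (mem_range.1 hi))
      (by intro z hz
          obtain ⟨i, hi, rfl⟩ := mem_image.1 hz
          have := hF w ⟨i, mem_range.1 hi⟩
          rw [hw] at this
          simpa using this.symm)
    ext i
    · have := hz.1 i i.2
      simpa [P] using this
    · have := hz.2 i i.2
      simpa [Q] using this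
  have surj : Function.Surjective F := by
    refine (LinearMap.injective_iff_surjective_of_finrank_eq_finrank ?_).1 inj
    simp [hn]
  obtain ⟨w, hw⟩ := surj (fun j => v j)
  refine ⟨P w, Q w, fun i hi => ?_⟩
  rw [← hF w ⟨i, hi⟩, hw]

/-- dominant behaviour at infinity -/
lemma dominant (k : ℕ) (p : ℕ → ℝ) (L : Finset ℝ) (b : ℝ → ℝ) (a : ℝ) (ha0 : 0 < a)
    (hL : ∀ l ∈ L, 0 < l) (ha : ∀ l ∈ L, l < a) :
    Filter.Tendsto (fun t => osum k p (insert a L) b t * Real.exp (-(a * t))) Filter.atTop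
      (nhds (b a / 2)) := by
  have haL : a ∉ L := fun h => lt_irrefl _ (ha a h)
  have e1 : ∀ c : ℝ, 0 < c → Filter.Tendsto (fun t : ℝ => Real.exp (-(c * t))) Filter.atTop
      (nhds 0) := by
    intro c hc
    exact Real.tendsto_exp_neg_atTop_nhds_zero.comp (Filter.tendsto_id.const_mul_atTop hc)
  have e2 : ∀ l : ℝ, (fun t => b l * Real.sinh (l * t) * Real.exp (-(a * t))) =
      fun t => b l / 2 * (Real.exp (-((a - l) * t)) - Real.exp (-((a + l) * t))) := by
    intro l; ext t
    rw [Real.sinh_eq, show -((a - l) * t) = l * t + -(a*t) by ring,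
      show -((a + l) * t) = -(l * t) + -(a*t) by ring, Real.exp_add, Real.exp_add]
    ring
  have h1 : ∀ i ∈ range k, Filter.Tendsto (fun t => p i * t ^ (2 * i + 1) * Real.exp (-(a * t)))
      Filter.atTop (nhds 0) := by
    intro i _
    have := (Real.tendsto_pow_mul_exp_neg_atTop_nhds_zero (2*i+1)).comp
      (Filter.tendsto_id.const_mul_atTop ha0)
    have := this.const_mul (p i / a ^ (2*i+1))
    rw [mul_zero] at this
    refine this.congr fun t => ?_
    simp only [Function.comp, id, mul_pow]
    field_simp
  have h2 : ∀ l ∈ L, Filter.Tendsto (fun t => b l * Real.sinh (l * t) * Real.exp (-(a * t)))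
      Filter.atTop (nhds 0) := by
    intro l hl
    rw [e2]
    have := ((e1 (a - l) (by linarith [ha l hl])).sub
      (e1 (a + l) (by linarith [hL l hl]))).const_mul (b l / 2)
    simpa using this
  have h3 : Filter.Tendsto (fun t => b a * Real.sinh (a * t) * Real.exp (-(a * t)))
      Filter.atTop (nhds (b a / 2)) := by
    rw [e2]
    have := ((tendsto_const_nhds (x := (1:ℝ))).sub
      (e1 (a + a) (by linarith))).const_mul (b a / 2)
    simpa using this
  have := (tendsto_finsetSum _ h1).add (h3.add (tendsto_finsetSum _ h2))
  simp only [sum_const_zero, zero_add, add_zero] at this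
  refine this.congr fun t => ?_
  unfold osum
  rw [sum_insert haL, add_mul, add_mul, sum_mul, sum_mul]

lemma dominant_pos (k : ℕ) (p : ℕ → ℝ) (L : Finset ℝ) (b : ℝ → ℝ) (a : ℝ) (ha0 : 0 < a)
    (hL : ∀ l ∈ L, 0 < l) (ha : ∀ l ∈ L, l < a) (s : ℝ) (hs : 0 < s * b a) (X : ℝ) :
    ∃ Y, X < Y ∧ 0 < s * osum k p (insert a L) b Y := by
  have h := (dominant k p L b a ha0 hL ha).const_mul s
  have h1 := h.eventually (lt_mem_nhds (show 0 < s * (b a / 2) by linarith))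
  obtain ⟨Y, h2, h3⟩ := (h1.and (Filter.eventually_gt_atTop X)).exists
  refine ⟨Y, h3, ?_⟩
  rw [← mul_assoc] at h2
  exact pos_of_mul_pos_left h2 (Real.exp_pos _).le

lemma osum_comb (k : ℕ) (p q : ℕ → ℝ) (L : Finset ℝ) (b c : ℝ → ℝ) (s t : ℝ) :
    osum k (fun i => p i - s * q i) L (fun l => b l - s * c l) t =
      osum k p L b t - s * osum k q L c t := by
  unfold osum
  simp only [sub_mul, sum_sub_distrib, mul_add, mul_sum, mul_assoc]
  ring

lemma step (L : Finset ℝ) (a : ℝ) (hL : ∀ l ∈ L, 0 < l) (ha0 : 0 < a) (ha : ∀ l ∈ L, l < a)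
    (k n : ℕ) (hn : n = k + 1 + L.card) (x : ℕ → ℝ) (h : ℝ) (hh : 0 < h) (hhx : h < x 0)
    (hx : ∀ i, i + 1 < n → x i < x (i + 1)) (hxp : ∀ i < n, 0 < x i)
    (hxi : ∀ i < n, ∀ j < n, x i = x j → i = j)
    (p : ℕ → ℝ) (b : ℝ → ℝ) (hA : ∀ i < n, osum (k+1) p L b (x i) = (-1) ^ i) :
    ∃ p' b', (∀ i < n, osum k p' (insert a L) b' (x i) = (-1) ^ i) ∧
      osum k p' (insert a L) b' h ≤ osum (k+1) p L b h := by
  have haL : a ∉ L := fun h => lt_irrefl _ (ha a h)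
  have hL' : ∀ l ∈ insert a L, 0 < l := by
    intro l hl
    rcases mem_insert.1 hl with rfl | hl
    · exact ha0
    · exact hL l hl
  have hc : (insert a L).card = L.card + 1 := card_insert_of_notMem haL
  obtain ⟨q, c, hq⟩ := interp (insert a L) hL' k n (by omega) x hxp hxi (fun i => (-1) ^ i)
  have sq1 : ∀ i : ℕ, ((-1:ℝ)) ^ i * (-1) ^ i = 1 := fun i => by
    rw [← mul_pow]; simp
  refine ⟨q, c, hq, ?_⟩
  -- sign of the leading coefficient
  have hlead : 0 < (-1) ^ (n - 1) * c a := by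
    by_contra hneg
    rcases eq_or_ne (c a) 0 with h0 | h0
    · refine no_alt L hL k q c (n-1) (by omega) x (hxp 0 (by omega))
        (fun i hi => hx i (by omega)) (fun i hi => ?_)
      have : osum k q L c (x i) = osum k q (insert a L) c (x i) := by
        unfold osum; rw [sum_insert haL, h0]; ring
      rw [this, hq i (by omega), sq1]; norm_num
    · have hlt : 0 < (-1) ^ n * c a := by
        have : (-1:ℝ) ^ n = - (-1) ^ (n-1) := by
          rw [show n = (n - 1) + 1 by omega, pow_succ]; simp
        rw [this]
        have h1 : (-1:ℝ) ^ (n-1) * c a ≠ 0 := mul_ne_zero (by simp) h0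
        have := lt_of_le_of_ne (not_lt.1 hneg) h1
        linarith
      obtain ⟨Y, hY, hY2⟩ := dominant_pos k q L c a ha0 hL ha _ hlt (x (n-1))
      refine no_alt (insert a L) hL' k q c n (by omega) (fun i => if i < n then x i else Y) ?_ ?_ ?_
      · simp only [show 0 < n by omega, if_true]; exact hxp 0 (by omega)
      · intro i hi
        by_cases h2 : i + 1 < n
        · simp only [hi, h2, if_true]; exact hx i h2
        · simp only [hi, h2, if_true, if_false]
          rwa [show i = n - 1 by omega]
      · intro i hi
        by_cases h2 : i < n
        · simp only [h2, if_true]; rw [hq i h2, sq1]; norm_num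
        · simp only [h2, if_false]
          rwa [show i = n by omega]
  -- comparison
  have hcmp : ∀ e : ℝ, 0 < e →
      osum k q (insert a L) c h ≤ (1 + e) * osum (k+1) p L b h := by
    intro e he
    by_contra hlt
    push Not at hlt
    let q' : ℕ → ℝ := fun i => if i < k then q i else 0
    let b' : ℝ → ℝ := fun l => if l ∈ L then b l else 0
    have e1 : ∀ t, osum (k+1) q' (insert a L) c t = osum k q (insert a L) c t := by
      intro t
      unfold osum
      rw [sum_range_succ]
      simp only [q', lt_irrefl, if_false, zero_mul, add_zero]
      congr 1
      exact sum_congr rfl fun i hi => by rw [if_pos (mem_range.1 hi)]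
    have e2 : ∀ t, osum (k+1) p (insert a L) b' t = osum (k+1) p L b t := by
      intro t
      unfold osum
      rw [sum_insert haL]
      simp only [b', haL, if_false, zero_mul, zero_add]
      congr 1
      exact sum_congr rfl fun i hi => by rw [if_pos hi]
    have e3 : ∀ t, osum (k+1) (fun i => q' i - (1+e) * p i) (insert a L)
        (fun l => c l - (1 + e) * b' l) t =
        osum k q (insert a L) c t - (1 + e) * osum (k+1) p L b t := by
      intro t; rw [osum_comb, e1, e2]
    obtain ⟨Y, hY, hY2⟩ := dominant_pos (k+1) (fun i => q' i - (1+e) * p i) L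
      (fun l => c l - (1 + e) * b' l) a ha0 hL ha ((-1) ^ (n-1))
      (by simp only [b', haL, if_false, mul_zero, sub_zero]; exact hlead) (x (n-1))
    refine no_alt (insert a L) hL' (k+1) (fun i => q' i - (1+e) * p i)
      (fun l => c l - (1 + e) * b' l) (n+1) (by omega)
      (fun i => if i = 0 then h else if i - 1 < n then x (i-1) else Y) ?_ ?_ ?_
    · simpa using hh
    · intro i hi
      rcases i with _ | i
      · simp [show 0 < n by omega, hhx]
      · simp only [Nat.add_eq_zero_iff, one_ne_zero, and_false, if_false, Nat.add_sub_cancel]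
        by_cases h2 : i + 1 < n
        · simp only [show i < n by omega, h2, if_true]; exact hx i h2
        · simp only [show i < n by omega, h2, if_true, if_false]
          rwa [show i = n - 1 by omega]
    · intro i hi
      rcases i with _ | i
      · simp only [if_true, pow_zero, one_mul]
        rw [e3]; linarith
      · simp only [Nat.add_eq_zero_iff, one_ne_zero, and_false, if_false, Nat.add_sub_cancel]
        by_cases h2 : i < n
        · simp only [h2, if_true]
          rw [e3, hq i h2, hA i h2, pow_succ]
          have := sq1 i
          have : (-1:ℝ) ^ i * -1 * ((-1) ^ i - (1 + e) * (-1) ^ i) = e * ((-1) ^ i * (-1) ^ i) := by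
            ring
          rw [this, sq1]; linarith
        · simp only [h2, if_false]
          have : (-1:ℝ) ^ (i+1) = (-1) ^ (n-1) := by
            rw [show i + 1 = (n - 1) + 2 by omega, pow_add]; simp
          rw [this]; exact hY2
  have ht : Filter.Tendsto (fun e : ℝ => (1 + e) * osum (k+1) p L b h) (nhdsWithin 0 (Set.Ioi 0))
      (nhds ((1 + 0) * osum (k+1) p L b h)) := by
    refine Filter.Tendsto.mono_left ?_ nhdsWithin_le_nhds
    exact Continuous.tendsto (by fun_prop) 0
  rw [add_zero, one_mul] at ht
  exact ge_of_tendsto ht (by filter_upwards [self_mem_nhdsWithin] with e he using hcmp e he)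

lemma descend (n : ℕ) (x : ℕ → ℝ) (h : ℝ) (hh : 0 < h) (hhx : h < x 0)
    (hx : ∀ i, i + 1 < n → x i < x (i + 1)) (hxp : ∀ i < n, 0 < x i)
    (hxi : ∀ i < n, ∀ j < n, x i = x j → i = j)
    (p : ℕ → ℝ) (hA : ∀ i < n, osum n p ∅ 0 (x i) = (-1) ^ i) (L : Finset ℝ) :
    (∀ l ∈ L, 0 < l) → ∀ k, n = k + L.card →
    ∃ p' b', (∀ i < n, osum k p' L b' (x i) = (-1) ^ i) ∧ osum k p' L b' h ≤ osum n p ∅ 0 h := by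
  induction L using Finset.induction_on_max with
  | empty =>
    intro _ k hk
    simp at hk
    subst hk
    exact ⟨p, 0, hA, le_refl _⟩
  | insert a L ha ih =>
    intro hL k hk
    have haL : a ∉ L := fun h => lt_irrefl _ (ha a h)
    rw [card_insert_of_notMem haL] at hk
    have hL1 : ∀ l ∈ L, 0 < l := fun l hl => hL l (mem_insert_of_mem hl)
    obtain ⟨p1, b1, h1, h2⟩ := ih hL1 (k+1) (by omega)
    obtain ⟨p2, b2, h3, h4⟩ := step L a hL1 (hL a (mem_insert_self _ _)) ha k n (by omega) x h hh
      hhx hx hxp hxi p1 b1 h1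
    exact ⟨p2, b2, h3, h4.trans h2⟩

lemma sin_poly (n : ℕ) : ∃ R : Polynomial ℝ, R.natDegree ≤ n ∧
    ∀ θ : ℝ, Real.sin ((2 * n + 1) * θ) = Real.sin θ * R.eval (Real.sin θ ^ 2) := by
  induction n using Nat.twoStepInduction with
  | zero => exact ⟨1, by simp, by simp⟩
  | one =>
    refine ⟨Polynomial.C 3 - Polynomial.C 4 * Polynomial.X, by compute_degree, fun θ => ?_⟩
    have := Real.sin_three_mul θ
    norm_num
    rw [this]; ring
  | more n ih1 ih2 =>
    obtain ⟨R, hR, hR2⟩ := ih1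
    obtain ⟨Q, hQ, hQ2⟩ := ih2
    refine ⟨(Polynomial.C 2 - Polynomial.C 4 * Polynomial.X) * Q - R, ?_, fun θ => ?_⟩
    · refine (Polynomial.natDegree_sub_le _ _).trans (max_le ?_ (by omega))
      refine Polynomial.natDegree_mul_le.trans ?_
      have : (Polynomial.C 2 - Polynomial.C 4 * Polynomial.X : Polynomial ℝ).natDegree ≤ 1 := by
        compute_degree
      omega
    · have h1 := hR2 θ
      have h2 := hQ2 θ
      have h3 : Real.sin ((2 * (n + 2 : ℕ) + 1) * θ) =
          2 * Real.cos (2 * θ) * Real.sin ((2 * (n + 1 : ℕ) + 1) * θ)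
            - Real.sin ((2 * n + 1) * θ) := by
        have a1 : (2 * ((n + 2 : ℕ) : ℝ) + 1) * θ = (2 * ((n + 1 : ℕ):ℝ) + 1) * θ + 2 * θ := by
          push_cast; ring
        have a2 : (2 * (n : ℝ) + 1) * θ = (2 * ((n + 1 : ℕ):ℝ) + 1) * θ - 2 * θ := by
          push_cast; ring
        rw [a1, a2, Real.sin_add, Real.sin_sub]; ring
      rw [h3, h1, h2, Real.cos_two_mul, Real.cos_sq']
      simp only [Polynomial.eval_sub, Polynomial.eval_mul, Polynomial.eval_C, Polynomial.eval_X]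
      ring

lemma sin_osum (n : ℕ) : ∃ p : ℕ → ℝ, ∀ θ : ℝ,
    osum (n + 1) p ∅ 0 (Real.sin θ) = Real.sin ((2 * n + 1) * θ) := by
  obtain ⟨R, hR, hR2⟩ := sin_poly n
  refine ⟨R.coeff, fun θ => ?_⟩
  rw [hR2, Polynomial.eval_eq_sum_range' (Nat.lt_succ_of_le hR), mul_sum]
  unfold osum
  simp only [sum_empty, add_zero]
  exact sum_congr rfl fun i _ => by ring

/-- the main estimate for sums of `n + 1` hyperbolic sines -/
lemma main_est (n : ℕ) (L : Finset ℝ) (hL : ∀ l ∈ L, 0 < l) (hc : L.card = n + 1) (b : ℝ → ℝ)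
    (B : ℝ) (hB0 : 0 ≤ B) (hB : ∀ z, 0 ≤ z → z ≤ 1 → |∑ l ∈ L, b l * Real.sinh (l * z)| ≤ B) (h : ℝ)
    (hh : 0 < h) (hhx : h < Real.sin (Real.pi / 2 / (2 * n + 1))) :
    ∑ l ∈ L, b l * Real.sinh (l * h) ≤ B * ((2 * n + 1) * Real.arcsin h) := by
  let φ : ℕ → ℝ := fun i => (2 * i + 1) * (Real.pi / 2 / (2 * n + 1))
  let x : ℕ → ℝ := fun i => Real.sin (φ i)
  have hd : (0:ℝ) < Real.pi / 2 / (2 * n + 1) := by positivity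
  have hφ0 : ∀ i, 0 < φ i := fun i => by positivity
  have hφ1 : ∀ i < n + 1, φ i ≤ Real.pi / 2 := by
    intro i hi
    have : (i:ℝ) ≤ n := by exact_mod_cast Nat.lt_succ_iff.1 hi
    have h2 : Real.pi / 2 = (2 * n + 1) * (Real.pi / 2 / (2 * n + 1)) := by field_simp
    rw [h2]
    exact mul_le_mul_of_nonneg_right (by linarith) hd.le
  have hφm : ∀ i j : ℕ, i < j → φ i < φ j := by
    intro i j hij
    have : (i:ℝ) < j := by exact_mod_cast hij
    exact mul_lt_mul_of_pos_right (by linarith) hd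
  have hmem : ∀ i < n + 1, φ i ∈ Set.Icc (-(Real.pi / 2)) (Real.pi / 2) := fun i hi =>
    ⟨by linarith [hφ0 i, Real.pi_pos], hφ1 i hi⟩
  have hxm : ∀ i < n + 1, ∀ j < n + 1, i < j → x i < x j := fun i hi j hj hij =>
    Real.strictMonoOn_sin (hmem i hi) (hmem j hj) (hφm i j hij)
  have hxp : ∀ i < n + 1, 0 < x i := fun i hi =>
    Real.sin_pos_of_pos_of_lt_pi (hφ0 i) (by linarith [hφ1 i hi, Real.pi_pos])
  have hxi : ∀ i < n + 1, ∀ j < n + 1, x i = x j → i = j := by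
    intro i hi j hj hij
    rcases lt_trichotomy i j with h1 | h1 | h1
    · exact absurd hij (hxm i hi j hj h1).ne
    · exact h1
    · exact absurd hij (hxm j hj i hi h1).ne'
  have hx0 : h < x 0 := by simpa [x, φ] using hhx
  obtain ⟨p, hp⟩ := sin_osum n
  have hA : ∀ i < n + 1, osum (n+1) p ∅ 0 (x i) = (-1) ^ i := by
    intro i _
    simp only [x]
    rw [hp, show (2 * (n:ℝ) + 1) * φ i = Real.pi / 2 + i * Real.pi by
      simp only [φ]; field_simp; ring, Real.sin_add_nat_mul_pi, Real.sin_pi_div_two, mul_one]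
  obtain ⟨q, c, h1, h2⟩ := descend (n+1) x h hh hx0 (fun i hi => hxm i (by omega) _ hi (by omega))
    hxp hxi p hA L hL 0 (by omega)
  have hh1 : h < 1 := hx0.trans_le (Real.sin_le_one _)
  have h3 : osum (n+1) p ∅ 0 h ≤ (2 * n + 1) * Real.arcsin h := by
    have := hp (Real.arcsin h)
    rw [Real.sin_arcsin (by linarith) hh1.le] at this
    rw [this]
    exact Real.sin_le (mul_nonneg (by positivity) (Real.arcsin_nonneg.2 hh.le))
  have e0 : ∀ z, osum 0 q L b z = ∑ l ∈ L, b l * Real.sinh (l * z) := by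
    intro z; simp [osum]
  have hcmp : ∀ C : ℝ, B < C → osum 0 q L b h ≤ C * osum 0 q L c h := by
    intro C hC
    by_contra hlt
    push Not at hlt
    refine no_alt L hL 0 (fun i => q i - C * q i) (fun l => b l - C * c l) (n+1) (by omega)
      (fun i => if i = 0 then h else x (i-1)) (by simpa using hh) ?_ ?_
    · intro i hi
      rcases i with _ | i
      · simpa using hx0
      · simpa using hxm i (by omega) (i+1) (by omega) (by omega)
    · intro i hi
      rcases i with _ | i
      · simp only [if_true, pow_zero, one_mul]
        rw [osum_comb]; linarith
      · simp only [Nat.add_eq_zero_iff, one_ne_zero, and_false, if_false, Nat.add_sub_cancel]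
        rw [osum_comb, h1 i (by omega), e0]
        have := abs_le.1 (hB (x i) (hxp i (by omega)).le (Real.sin_le_one _))
        rcases neg_one_pow_eq_or ℝ i with h5 | h5 <;> rw [pow_succ, h5] <;> linarith
  have ht : Filter.Tendsto (fun C : ℝ => C * osum 0 q L c h) (nhdsWithin B (Set.Ioi B))
      (nhds (B * osum 0 q L c h)) := by
    refine Filter.Tendsto.mono_left ?_ nhdsWithin_le_nhds
    exact Continuous.tendsto (f := fun C : ℝ => C * osum 0 q L c h) (by fun_prop) B
  have h6 : osum 0 q L b h ≤ B * osum 0 q L c h :=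
    ge_of_tendsto ht (by filter_upwards [self_mem_nhdsWithin] with e he using hcmp e he)
  rw [← e0]
  exact h6.trans (mul_le_mul_of_nonneg_left (h2.trans h3) hB0)

lemma merge (m : ℕ) (C l : ℕ → ℝ) : ∃ (L : Finset ℝ) (b : ℝ → ℝ), (∀ a ∈ L, 0 < a) ∧ L.card ≤ m ∧
    ∀ z, ∑ i ∈ range m, C i * Real.sinh (l i * z) = ∑ a ∈ L, b a * Real.sinh (a * z) := by
  classical
  induction m with
  | zero => exact ⟨∅, 0, by simp, by simp, by simp⟩
  | succ m ih =>
    obtain ⟨L, b, h1, h2, h3⟩ := ih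
    obtain ⟨a, D, ha, hD⟩ : ∃ a D : ℝ, 0 ≤ a ∧ ∀ z, C m * Real.sinh (l m * z)
        = D * Real.sinh (a * z) := by
      rcases le_total 0 (l m) with h | h
      · exact ⟨l m, C m, h, fun _ => rfl⟩
      · refine ⟨-l m, -C m, by linarith, fun z => ?_⟩
        rw [neg_mul (l m), Real.sinh_neg]; ring
    rcases ha.eq_or_lt with h0 | h0
    · refine ⟨L, b, h1, by omega, fun z => ?_⟩
      rw [sum_range_succ, hD, h3, ← h0]; simp
    by_cases haL : a ∈ L
    · refine ⟨L, Function.update b a (b a + D), h1, by omega, fun z => ?_⟩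
      rw [sum_range_succ, hD, h3, ← add_sum_erase _ _ haL, ← add_sum_erase _ _ haL,
        Function.update_self]
      rw [sum_congr (s₁ := L.erase a)
        (f := fun x => Function.update b a (b a + D) x * Real.sinh (x * z))
        (g := fun x => b x * Real.sinh (x * z)) rfl
        (fun y hy => by rw [Function.update_of_ne (ne_of_mem_erase hy)])]
      ring
    · refine ⟨insert a L, Function.update b a D, ?_, ?_, fun z => ?_⟩
      · intro y hy
        rcases mem_insert.1 hy with rfl | hy
        · exact h0
        · exact h1 y hy
      · rw [card_insert_of_notMem haL]; omega
      · rw [sum_range_succ, hD, h3, sum_insert haL, Function.update_self]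
        rw [sum_congr (s₁ := L) (f := fun x => Function.update b a D x * Real.sinh (x * z))
          (g := fun x => b x * Real.sinh (x * z)) rfl
          (fun y hy => by
            rw [Function.update_of_ne (fun h : y = a => haL (h ▸ hy))])]
        ring

/-- Discrete Markov-type inequality for exponential sums (Borwein–Erdélyi):
if `u(s) = c₀ + Σ_{i=1}^m cᵢ γᵢ^s` with `γᵢ > 0` and `|u| ≤ B` on `[0, ∞)`,
then `|u(t+1) − u(t)| ≤ (2m/t)·B` for every integer `t ≥ 1`. -/
theorem stmt14 (m : ℕ) (c : ℕ → ℝ) (γ : ℕ → ℝ) (hγ : ∀ i, 0 < γ i)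
    (u : ℝ → ℝ)
    (hu : ∀ s : ℝ, u s = c 0 + ∑ i ∈ Finset.range m, c (i + 1) * (γ i) ^ s)
    (t : ℕ) (ht : 1 ≤ t) (B : ℝ) (hB : ∀ s : ℝ, 0 ≤ s → |u s| ≤ B) :
    |u ((t : ℝ) + 1) - u (t : ℝ)| ≤ (2 * (m : ℝ) / (t : ℝ)) * B := by
  have hB0 : 0 ≤ B := (abs_nonneg _).trans (hB 0 le_rfl)
  have ht1 : (1:ℝ) ≤ t := by exact_mod_cast ht
  have htp : (0:ℝ) < t := by linarith
  set d : ℝ := t + 1 / 2 with hd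
  obtain ⟨L, b, hL, hcard, hLb⟩ := merge m (fun i => c (i+1) * γ i ^ d)
    (fun i => d * Real.log (γ i))
  have hg : ∀ z, ∑ a ∈ L, b a * Real.sinh (a * z) = (u (d + d * z) - u (d - d * z)) / 2 := by
    intro z
    rw [← hLb, hu, hu, add_sub_add_left_eq_sub, ← sum_sub_distrib, sum_div]
    refine sum_congr rfl fun i _ => ?_
    rw [Real.sinh_eq, Real.rpow_add (hγ i) d (d * z), sub_eq_add_neg d,
      Real.rpow_add (hγ i) d (-(d * z)),
      Real.rpow_def_of_pos (hγ i) (d * z), Real.rpow_def_of_pos (hγ i) (-(d * z)),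
      show d * Real.log (γ i) * z = Real.log (γ i) * (d * z) by ring,
      show -(Real.log (γ i) * (d * z)) = Real.log (γ i) * -(d * z) by ring]
    ring
  have hgB : ∀ z, 0 ≤ z → z ≤ 1 → |∑ a ∈ L, b a * Real.sinh (a * z)| ≤ B := by
    intro z h0 h1
    rw [hg]
    have hd0 : 0 ≤ d := by positivity
    have h2 := abs_le.1 (hB (d + d * z) (by positivity))
    have h3 := abs_le.1 (hB (d - d * z) (by nlinarith))
    rw [abs_le]; constructor <;> linarith
  set h : ℝ := 1 / (2 * t + 1) with hh
  have hhp : 0 < h := by positivity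
  have hdh : d * h = 1 / 2 := by rw [hd, hh]; field_simp
  have hgh : u (t + 1) - u t = 2 * ∑ a ∈ L, b a * Real.sinh (a * h) := by
    rw [hg, hdh, hd, show (t:ℝ) + 1/2 + 1/2 = t + 1 by ring, show (t:ℝ) + 1/2 - 1/2 = t by ring]
    ring
  have hmL : (L.card : ℝ) ≤ m := by exact_mod_cast hcard
  rcases Nat.eq_zero_or_pos L.card with h0 | h0
  · rw [card_eq_zero] at h0
    rw [hgh, h0]
    simp only [sum_empty, mul_zero, abs_zero]
    positivity
  obtain ⟨n, hn⟩ : ∃ n, L.card = n + 1 := ⟨L.card - 1, by omega⟩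
  have hnm : (n:ℝ) + 1 ≤ m := by rw [hn] at hmL; exact_mod_cast hmL
  rcases lt_or_ge h (Real.sin (Real.pi / 2 / (2 * n + 1))) with hlt | hge
  · have k1 := main_est n L hL hn b B hB0 hgB h hhp hlt
    have k2 := main_est n L hL hn (fun a => - b a) B hB0 (by
      intro z z0 z1
      have := hgB z z0 z1
      simpa only [neg_mul, sum_neg_distrib, abs_neg] using this) h hhp hlt
    simp only [neg_mul, sum_neg_distrib] at k2
    have k3 : |∑ a ∈ L, b a * Real.sinh (a * h)| ≤ B * ((2 * n + 1) * Real.arcsin h) :=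
      abs_le'.2 ⟨k1, k2⟩
    have k4 : Real.arcsin h ≤ 1 / (2 * t) := by
      have x0 : (0:ℝ) < 1 / (2 * t) := by positivity
      have x1 : (1:ℝ) / (2 * t) ≤ 1 := by rw [div_le_one (by positivity)]; linarith
      rw [Real.arcsin_le_iff_le_sin' ⟨by linarith [Real.pi_pos], by linarith [Real.pi_gt_three]⟩]
      have s1 := Real.sin_gt_sub_cube x0
      set y : ℝ := 1 / (2 * t) with hy
      have hhy : h = y / (1 + y) := by rw [hh, hy]; field_simp
      refine le_trans ?_ s1.le
      rw [hhy, div_le_iff₀ (by positivity)]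
      nlinarith [mul_nonneg x0.le (sub_nonneg.2 x1), mul_nonneg (sq_nonneg y) (sub_nonneg.2 x1),
        mul_nonneg (pow_nonneg x0.le 3) (sub_nonneg.2 x1)]
    rw [hgh, abs_mul, abs_two]
    have k5 : (2 * (n:ℝ) + 1) * Real.arcsin h ≤ (2 * m) * (1 / (2 * t)) :=
      mul_le_mul (by linarith) k4 (Real.arcsin_nonneg.2 hhp.le) (by positivity)
    calc 2 * |∑ a ∈ L, b a * Real.sinh (a * h)| ≤ 2 * (B * ((2 * m) * (1 / (2 * t)))) := by
          have := mul_le_mul_of_nonneg_left k5 hB0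
          linarith
      _ = 2 * m / t * B := by field_simp
  · have k1 : 1 / (2 * (n:ℝ) + 1) ≤ h := by
      refine le_trans ?_ hge
      have hb : Real.pi / 2 / (2 * n + 1) ≤ Real.pi / 2 :=
        div_le_self (by positivity) (by linarith [Nat.cast_nonneg (α := ℝ) n])
      have := Real.mul_le_sin (x := Real.pi / 2 / (2 * n + 1)) (by positivity) hb
      refine le_trans (le_of_eq ?_) this
      field_simp
    rw [hh, one_div_le_one_div (by positivity) (by positivity)] at k1
    have k2 : 2 ≤ 2 * (m:ℝ) / t := by
      rw [le_div_iff₀ htp]; linarith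
    have a1 := abs_le.1 (hB (t+1) (by positivity))
    have a2 := abs_le.1 (hB t (by positivity))
    refine le_trans ?_ (mul_le_mul_of_nonneg_right k2 hB0)
    rw [abs_le]; constructor <;> linarith
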